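/- Volume comparison for intersections of disks on the round sphere (Lemma 3.1, k = 1 case): let n ≥ 2, let S be the unit sphere in EuclideanSpace ℝ (Fin (n+1)) equipped with its canonical (surface) measure μ, and let p ∈ S. Let R ∈ (0, π/2] and let C ⊆ {c ∈ S : ⟨p,c⟩ = cos R} be a subset of the metric sphere of radius R about p such that the directions from p to C form a π/2-net: for every unit vector v with ⟨v,p⟩ = 0 there exists c ∈ C with ⟨v,c⟩ ≥ 0. For c ∈ S and r ∈ (0, π], write D(c,r) = {x ∈ S : ⟨c,x⟩ ≥ cos r} for the closed geodesic disk of radius r about c. Then for every r ∈ (0, π] and every unit vector u with ⟨u,p⟩ = 0, setting c₁ = cos R·p + sin R·u and c₂ = cos R·p − sin R·u, one has μ( ⋂_{c ∈ C} D(c,r) ) ≤ μ( D(c₁,r) ∩ D(c₂,r) ). -/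

import Mathlib

open scoped RealInnerProductSpace

/-- `(n+1)`-dimensional Euclidean space. -/
noncomputable abbrev Esp (n : ℕ) := EuclideanSpace ℝ (Fin (n + 1))

/-- The unit sphere `Sⁿ ⊆ ℝ^{n+1}`. -/
noncomputable abbrev USphere (n : ℕ) := Metric.sphere (0 : Esp n) 1

/-- The canonical surface measure on the unit sphere. -/
noncomputable def sphereMeasure (n : ℕ) : MeasureTheory.Measure (USphere n) :=
  (MeasureTheory.volume : MeasureTheory.Measure (Esp n)).toSphere

/-- The closed geodesic disk of radius `r` about a unit vector `c`, as a subset of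
the unit sphere. -/
def geoDisk {n : ℕ} (c : Esp n) (r : ℝ) : Set (USphere n) :=
  {x : USphere n | Real.cos r ≤ ⟪c, (x : Esp n)⟫}

/-!
Decompose the sphere by the geodesic distance `θ` to `p`. On the slice at distance `θ`, a sphere of
one dimension less, each disk becomes a halfspace condition `⟪q, w⟫ ≤ l θ`, where `-q` is the
component of its centre orthogonal to `p`. It therefore suffices to show, for vectors `q` of equal
norm meeting every closed hemisphere and for `l ≥ 0`, that the caps `{l < ⟪q, w⟫}` cover at least
as much as two opposite caps. On the Voronoi cell of `q`, which is star-shaped about `q` in polar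
coordinates, the cap `{l < ⟪q, w⟫}` is at least as dense as in the hemisphere `{0 ≤ ⟪q, w⟫}`.
Summing over the cells, the caps cover at least the fraction of the sphere that one cap occupies in
its hemisphere, which is the measure of two caps. Infinite families reduce to finite ones by
compactness.
-/

section

open MeasureTheory Set Metric Real
open scoped ENNReal

theorem measure_mul_setLIntegral_le {α : Type*} [MeasurableSpace α] {μ : Measure α} {s t : Set α}
    {f : α → ℝ≥0∞} (hs : MeasurableSet s) (hst : s ⊆ t) (hf : ∀ x ∈ s, ∀ y ∈ t \ s, f y ≤ f x) :
    μ s * ∫⁻ x in t, f x ∂μ ≤ μ t * ∫⁻ x in s, f x ∂μ := by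
  set c := ⨆ y ∈ t \ s, f y
  have upper : ∫⁻ x in t \ s, f x ∂μ ≤ c * μ (t \ s) :=
    (setLIntegral_mono measurable_const fun y hy ↦ le_iSup₂ (f := fun y _ ↦ f y) y hy).trans_eq
      (setLIntegral_const _ c)
  have lower : c * μ s ≤ ∫⁻ x in s, f x ∂μ :=
    (setLIntegral_const s c).symm.trans_le
      (setLIntegral_mono' hs fun x hx ↦ iSup₂_le fun y hy ↦ hf x hx y hy)
  calc μ s * ∫⁻ x in t, f x ∂μ
      = μ s * ∫⁻ x in s, f x ∂μ + μ s * ∫⁻ x in t \ s, f x ∂μ := by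
        rw [← mul_add, ← lintegral_inter_add_sdiff f t hs, inter_eq_right.2 hst]
    _ ≤ μ s * ∫⁻ x in s, f x ∂μ + μ s * (c * μ (t \ s)) := by gcongr
    _ = μ s * ∫⁻ x in s, f x ∂μ + μ (t \ s) * (c * μ s) := by ring
    _ ≤ μ s * ∫⁻ x in s, f x ∂μ + μ (t \ s) * ∫⁻ x in s, f x ∂μ := by gcongr
    _ = μ t * ∫⁻ x in s, f x ∂μ := by
        rw [← add_mul, ← measure_inter_add_sdiff t hs, inter_eq_right.2 hst]

theorem cos_smul_add_sin_smul_mem_of_lt {M : Type*} [AddCommGroup M] [Module ℝ M]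
    (V : ConvexCone ℝ M) {p w : M} (hp : p ∈ V) {θ θ' : Ioo (0 : ℝ) π} (hθ : θ' < θ)
    (h : cos θ • p + sin θ • w ∈ V) :
    cos θ' • p + sin θ' • w ∈ V := by
  have hsin : 0 < sin (θ : ℝ) := sin_pos_of_mem_Ioo θ.2
  have hsin' : 0 < sin (θ' : ℝ) := sin_pos_of_mem_Ioo θ'.2
  have hsub : 0 < sin ((θ : ℝ) - θ') :=
    sin_pos_of_pos_of_lt_pi (sub_pos.2 hθ) (by linarith [θ.2.2, θ'.2.1])
  have hcomb : (sin (θ' : ℝ) / sin θ) • (cos θ • p + sin θ • w) + (sin ((θ : ℝ) - θ') / sin θ) • p =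
      cos θ' • p + sin θ' • w := by
    rw [sin_sub]
    match_scalars <;> field_simp
    ring
  rw [← hcomb]
  exact V.add_mem (V.smul_mem (div_pos hsin' hsin) h) (V.smul_mem (div_pos hsub hsin) hp)

variable {E : Type*} [NormedAddCommGroup E] [InnerProductSpace ℝ E]

theorem norm_smul_add_smul_sphere {p : E} (hp : ‖p‖ = 1) (a s : ℝ) (w : sphere (0 : (ℝ ∙ p)ᗮ) 1) :
    ‖a • p + s • ((w : (ℝ ∙ p)ᗮ) : E)‖ = ‖(⟨a, s⟩ : ℂ)‖ := by
  have hw : ‖((w : (ℝ ∙ p)ᗮ) : E)‖ = 1 := norm_eq_of_mem_sphere w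
  have hpw : ⟪p, ((w : (ℝ ∙ p)ᗮ) : E)⟫ = 0 :=
    Submodule.mem_orthogonal_singleton_iff_inner_right.1 w.1.2
  rw [← sq_eq_sq₀ (norm_nonneg _) (norm_nonneg _), norm_add_sq_real, Complex.sq_norm,
    Complex.normSq_mk]
  simp [norm_smul, inner_smul_left, inner_smul_right, hp, hw, hpw, sq]

theorem norm_eq_abs_sin_of_norm_cos_smul_sub {p : E} (hp : ‖p‖ = 1) {R : ℝ} {q : (ℝ ∙ p)ᗮ}
    (h : ‖cos R • p - q‖ = 1) : ‖q‖ = |sin R| := by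
  have hpq : ⟪p, (q : E)⟫ = 0 := Submodule.mem_orthogonal_singleton_iff_inner_right.1 q.2
  have hsq : cos R ^ 2 + ‖q‖ ^ 2 = 1 := by
    simpa [h, norm_smul, inner_smul_left, hp, hpq] using
      (norm_sub_sq_real (cos R • p) (q : E)).symm
  rw [← sq_eq_sq₀ (norm_nonneg _) (abs_nonneg _), sq_abs, sin_sq]
  linarith

theorem le_inner_slice_iff {p : E} (hp : ‖p‖ = 1) (a b : ℝ) (q w : (ℝ ∙ p)ᗮ) (θ : Ioo (0 : ℝ) π) :
    b ≤ ⟪a • p - q, cos θ • p + sin θ • (w : E)⟫ ↔ ⟪q, w⟫ ≤ (a * cos θ - b) / sin θ := by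
  have hpw : ⟪p, (w : E)⟫ = 0 := Submodule.mem_orthogonal_singleton_iff_inner_right.1 w.2
  have hqp : ⟪(q : E), p⟫ = 0 := Submodule.mem_orthogonal_singleton_iff_inner_left.1 q.2
  have hinner : ⟪a • p - q, cos θ • p + sin θ • (w : E)⟫ = a * cos θ - ⟪q, w⟫ * sin θ := by
    simp [inner_sub_left, inner_add_right, inner_smul_left, inner_smul_right, hpw, hqp, hp,
      mul_comm, ← sub_eq_add_neg]
  rw [hinner, le_div_iff₀ (sin_pos_of_mem_Ioo θ.2), le_sub_comm]

/-- The cone over the Voronoi cell of `q` in `t`, for dividing the sphere among the caps about the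
points of `t`. Comparing inner products amounts to comparing distances when all points of
`t ∪ {q}` have the same norm. -/
def voronoiCone (t : Set E) (q : E) : ConvexCone ℝ E where
  carrier := {x | ∀ q' ∈ t, ⟪q', x⟫ ≤ ⟪q, x⟫}
  smul_mem' c hc x hx q' hq' := by
    rw [inner_smul_right, inner_smul_right]
    exact mul_le_mul_of_nonneg_left (hx q' hq') hc.le
  add_mem' x hx y hy q' hq' := by
    rw [inner_add_right, inner_add_right]
    exact add_le_add (hx q' hq') (hy q' hq')

theorem self_mem_voronoiCone {t : Set E} {q : E} (h : ∀ q' ∈ t, ‖q'‖ = ‖q‖) :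
    q ∈ voronoiCone t q := fun q' hq' ↦ by
  rw [real_inner_self_eq_norm_mul_norm]
  exact (real_inner_le_norm q' q).trans_eq (by rw [h q' hq'])

theorem exists_mem_voronoiCone {t : Finset E} (ht : t.Nonempty) (x : E) :
    ∃ q ∈ t, x ∈ voronoiCone (t : Set E) q :=
  t.exists_max_image (fun q ↦ ⟪q, x⟫) ht

variable [MeasurableSpace E] [BorelSpace E]

theorem measurableSet_voronoiCone (t : Set E) (q : E) :
    MeasurableSet (voronoiCone t q : Set E) := by
  have h : (voronoiCone t q : Set E) = ⋂ q' ∈ t, {x | ⟪q', x⟫ ≤ ⟪q, x⟫} := by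
    ext x
    simp [voronoiCone]
  rw [h]
  exact (isClosed_biInter fun q' _ ↦ isClosed_le (by fun_prop) (by fun_prop)).measurableSet

variable [FiniteDimensional ℝ E]

local notation "σ[" E "]" => Measure.toSphere (volume : Measure E)

/-! ### The surface measure of the sphere -/

theorem measurableSet_ball_cone {A : Set E} (hA : MeasurableSet A) :
    MeasurableSet {y : E | y ≠ 0 ∧ ‖y‖ < 1 ∧ ‖y‖⁻¹ • y ∈ A} := by
  have hnormalize : Measurable fun y : E ↦ ‖y‖⁻¹ • y := by fun_prop
  exact (measurableSet_singleton 0).compl.inter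
    ((measurableSet_lt measurable_norm measurable_const).inter (hnormalize hA))

theorem toSphere_preimage_coe {A : Set E} (hA : MeasurableSet A) :
    σ[E] ((↑) ⁻¹' A) =
      Module.finrank ℝ E * volume {y : E | y ≠ 0 ∧ ‖y‖ < 1 ∧ ‖y‖⁻¹ • y ∈ A} := by
  rw [Measure.toSphere_apply' volume (measurable_subtype_coe hA)]
  congr 2
  ext y
  simp only [mem_smul, mem_image, mem_preimage, mem_ofPred_eq]
  constructor
  · rintro ⟨t, ⟨ht₀, ht₁⟩, _, ⟨x, hx, rfl⟩, rfl⟩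
    have hnorm : ‖t • (x : E)‖ = t := by simp [norm_smul, ht₀.le]
    refine ⟨norm_ne_zero_iff.1 (hnorm.trans_ne ht₀.ne'), hnorm.trans_lt ht₁, ?_⟩
    rwa [hnorm, inv_smul_smul₀ ht₀.ne']
  · rintro ⟨hy₀, hy₁, hyA⟩
    exact ⟨‖y‖, ⟨norm_pos_iff.2 hy₀, hy₁⟩, ‖y‖⁻¹ • y,
      ⟨⟨‖y‖⁻¹ • y, by simp [norm_smul, hy₀]⟩, hyA, rfl⟩, smul_inv_smul₀ (norm_ne_zero_iff.2 hy₀) y⟩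

theorem toSphere_preimage_isometry (f : E ≃ₗᵢ[ℝ] E) {A : Set E} (hA : MeasurableSet A) :
    σ[E] {x | f x ∈ A} = σ[E] ((↑) ⁻¹' A) := by
  have hf := f.measurePreserving
  rw [toSphere_preimage_coe hA,
    ← hf.measure_preimage (measurableSet_ball_cone hA).nullMeasurableSet]
  refine (toSphere_preimage_coe (hf.measurable hA)).trans ?_
  simp

theorem toSphere_inner_congr {q u : E} (h : ‖q‖ = ‖u‖) {P : Set ℝ} (hP : MeasurableSet P) :
    σ[E] {x | ⟪q, x⟫ ∈ P} = σ[E] {x | ⟪u, x⟫ ∈ P} := by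
  obtain ⟨f, hf⟩ : ∃ f : E ≃ₗᵢ[ℝ] E, f q = u := ⟨_, Submodule.reflection_sub h⟩
  have hinner : Measurable fun x : E ↦ ⟪u, x⟫ := by fun_prop
  refine Eq.trans ?_ (toSphere_preimage_isometry f (hinner hP))
  simp only [mem_preimage, ← hf, LinearIsometryEquiv.inner_map_map]

theorem toSphere_inner_eq_zero {m : E} (hm : m ≠ 0) : σ[E] {x | ⟪m, x⟫ = 0} = 0 := by
  have hyperplane_null : volume ((ℝ ∙ m)ᗮ : Set E) = 0 :=
    Measure.addHaar_submodule volume _ (by simpa [Submodule.orthogonal_eq_top_iff] using hm)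
  have hA : MeasurableSet {x : E | ⟪m, x⟫ = 0} := measurableSet_eq_fun (by fun_prop) (by fun_prop)
  refine (toSphere_preimage_coe hA).trans (mul_eq_zero_of_right _ ?_)
  refine measure_mono_null (fun y ⟨hy, _, hmy⟩ ↦ ?_) hyperplane_null
  simpa [Submodule.mem_orthogonal_singleton_iff_inner_right, inner_smul_right, hy] using hmy

theorem toSphere_univ_eq_two_mul {u : E} (hu : u ≠ 0) :
    σ[E] univ = 2 * σ[E] {x | 0 ≤ ⟪u, x⟫} := by
  have hcover : {x : sphere (0 : E) 1 | 0 ≤ ⟪u, x⟫} ∪ {x : sphere (0 : E) 1 | 0 ≤ ⟪-u, x⟫} = univ :=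
    eq_univ_of_forall fun x ↦ by simpa using le_total 0 ⟪u, (x : E)⟫
  have hdisj : AEDisjoint σ[E] {x | 0 ≤ ⟪u, x⟫} {x | 0 ≤ ⟪-u, x⟫} :=
    measure_mono_null (fun x hx ↦ by
      simp only [mem_inter_iff, mem_ofPred_eq, inner_neg_left, neg_nonneg] at hx
      exact le_antisymm hx.2 hx.1) (toSphere_inner_eq_zero hu)
  have hmeas : MeasurableSet {x : sphere (0 : E) 1 | 0 ≤ ⟪-u, x⟫} :=
    measurableSet_le (by fun_prop) (by fun_prop)
  rw [← hcover, measure_union₀ hmeas.nullMeasurableSet hdisj, two_mul]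
  congr 1
  exact toSphere_inner_congr (norm_neg u) measurableSet_Ici

/-! ### Geodesic polar coordinates -/

theorem measurePreserving_smul_sphere [Nontrivial E] :
    MeasurePreserving (fun z : sphere (0 : E) 1 × Ioi (0 : ℝ) ↦ (z.2 : ℝ) • (z.1 : E))
      (σ[E].prod (Measure.volumeIoiPow (Module.finrank ℝ E - 1))) volume := by
  have coe_preserving : MeasurePreserving ((↑) : ({0}ᶜ : Set E) → E)
      ((volume : Measure E).comap (↑)) volume :=
    ⟨measurable_subtype_coe, by
      rw [map_comap_subtype_coe (measurableSet_singleton _).compl,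
        Measure.restrict_eq_self_of_ae_mem (by simp [ae_iff])]⟩
  exact coe_preserving.comp <| MeasurePreserving.symm
    (homeomorphUnitSphereProd E).toMeasurableEquiv volume.measurePreserving_homeomorphUnitSphereProd

theorem measurePreserving_smul_add_orthogonal {p : E} (hp : ‖p‖ = 1) :
    MeasurePreserving (fun z : ℝ × (ℝ ∙ p)ᗮ ↦ z.1 • p + (z.2 : E)) (volume.prod volume) volume := by
  have line := (LinearIsometryEquiv.toSpanUnitSingleton (𝕜 := ℝ) p hp).measurePreserving
  have sum := (ℝ ∙ p).orthogonalDecomposition.symm.measurePreserving.comp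
    (WithLp.volume_preserving_toLp (ℝ ∙ p) (ℝ ∙ p)ᗮ)
  refine (congrArg (MeasurePreserving · _ _) (funext fun z ↦ ?_)).mp
    (sum.comp (line.prod (MeasurePreserving.id volume)))
  simp [Submodule.orthogonalDecomposition_symm_apply]

theorem measurePreserving_smul_add_smul_sphere {p : E} (hp : ‖p‖ = 1) [Nontrivial (ℝ ∙ p)ᗮ] :
    MeasurePreserving
      (fun z : (ℝ × Ioi (0 : ℝ)) × sphere (0 : (ℝ ∙ p)ᗮ) 1 ↦
        z.1.1 • p + (z.1.2 : ℝ) • ((z.2 : (ℝ ∙ p)ᗮ) : E))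
      ((volume.prod (Measure.volumeIoiPow (Module.finrank ℝ (ℝ ∙ p)ᗮ - 1))).prod σ[(ℝ ∙ p)ᗮ])
      volume :=
  (measurePreserving_smul_add_orthogonal hp).comp <|
    ((MeasurePreserving.id volume).prod
      (measurePreserving_smul_sphere.comp Measure.measurePreserving_swap)).comp
    (measurePreserving_prodAssoc _ _ _)

/-- The polar angle, in `(0, π)`, of the point `(a, s)` of the open upper half plane. It is the
angle between `p` and `a • p + s • w` for orthogonal unit vectors `p` and `w`. -/
noncomputable def halfPlaneArg (z : ℝ × Ioi (0 : ℝ)) : Ioo (0 : ℝ) π :=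
  ⟨Complex.arg ⟨z.1, z.2⟩,
    (Complex.arg_nonneg_iff.2 (mem_Ioi.1 z.2.2).le).lt_of_ne' fun h ↦
      (mem_Ioi.1 z.2.2).ne' (Complex.arg_eq_zero_iff.1 h).2,
    Complex.arg_lt_pi_iff.2 (Or.inr (mem_Ioi.1 z.2.2).ne')⟩

theorem measurable_halfPlane_toComplex :
    Measurable fun z : ℝ × Ioi (0 : ℝ) ↦ (⟨z.1, z.2⟩ : ℂ) :=
  Complex.measurableEquivRealProd.symm.measurable.comp
    (measurable_fst.prodMk (measurable_subtype_coe.comp measurable_snd))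

theorem measurable_halfPlaneArg : Measurable halfPlaneArg :=
  (Complex.measurable_arg.comp measurable_halfPlane_toComplex).subtype_mk

theorem cos_halfPlaneArg (z : ℝ × Ioi (0 : ℝ)) :
    cos (halfPlaneArg z) = ‖(⟨z.1, z.2⟩ : ℂ)‖⁻¹ * z.1 :=
  (Complex.cos_arg fun h ↦ (mem_Ioi.1 z.2.2).ne' (congrArg Complex.im h)).trans (div_eq_inv_mul _ _)

theorem sin_halfPlaneArg (z : ℝ × Ioi (0 : ℝ)) :
    sin (halfPlaneArg z) = ‖(⟨z.1, z.2⟩ : ℂ)‖⁻¹ * z.2 :=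
  (Complex.sin_arg _).trans (div_eq_inv_mul _ _)

theorem exists_toSphere_eq_lintegral {p : E} (hp : ‖p‖ = 1) [Nontrivial (ℝ ∙ p)ᗮ] :
    ∃ ν : Measure (Ioo (0 : ℝ) π), ∀ A : Set E, MeasurableSet A →
      σ[E] ((↑) ⁻¹' A) =
        ∫⁻ θ, σ[(ℝ ∙ p)ᗮ] {w | cos θ • p + sin θ • ((w : (ℝ ∙ p)ᗮ) : E) ∈ A} ∂ν := by
  set η : Measure (ℝ × Ioi (0 : ℝ)) :=
    volume.prod (Measure.volumeIoiPow (Module.finrank ℝ (ℝ ∙ p)ᗮ - 1))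
  set disk : Set (ℝ × Ioi (0 : ℝ)) := {z | ‖(⟨z.1, z.2⟩ : ℂ)‖ < 1}
  have hdisk : MeasurableSet disk :=
    measurableSet_lt measurable_halfPlane_toComplex.norm measurable_const
  refine ⟨(Module.finrank ℝ E : ℝ≥0∞) • (η.restrict disk).map halfPlaneArg, fun A hA ↦ ?_⟩
  have hslice : Measurable fun θ : Ioo (0 : ℝ) π ↦
      σ[(ℝ ∙ p)ᗮ] {w | cos θ • p + sin θ • ((w : (ℝ ∙ p)ᗮ) : E) ∈ A} :=
    measurable_measure_prodMk_left <| (show Measurable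
      fun z : Ioo (0 : ℝ) π × sphere (0 : (ℝ ∙ p)ᗮ) 1 ↦
        cos z.1 • p + sin z.1 • ((z.2 : (ℝ ∙ p)ᗮ) : E) by fun_prop) hA
  have hcyl := measurePreserving_smul_add_smul_sphere hp
  have hball := measurableSet_ball_cone hA
  rw [lintegral_smul_measure, lintegral_map hslice measurable_halfPlaneArg, smul_eq_mul,
    toSphere_preimage_coe hA, ← hcyl.measure_preimage hball.nullMeasurableSet,
    Measure.prod_apply (hcyl.measurable hball), ← lintegral_indicator hdisk]
  congr 2 with z
  have hpos : (0 : ℝ) < ‖(⟨z.1, z.2⟩ : ℂ)‖ :=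
    norm_pos_iff.2 fun h ↦ (mem_Ioi.1 z.2.2).ne' (congrArg Complex.im h)
  by_cases hz : z ∈ disk
  · rw [indicator_of_mem hz]
    congr 1
    ext w
    have hnorm := norm_smul_add_smul_sphere hp z.1 z.2 w
    have hne : z.1 • p + (z.2 : ℝ) • ((w : (ℝ ∙ p)ᗮ) : E) ≠ 0 :=
      norm_ne_zero_iff.1 (hnorm.trans_ne hpos.ne')
    simp only [mem_preimage, mem_ofPred_eq, hnorm, smul_add, smul_smul, cos_halfPlaneArg,
      sin_halfPlaneArg, ne_eq, hne, not_false_eq_true, true_and]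
    exact and_iff_right hz
  · rw [indicator_of_notMem hz]
    refine measure_mono_null (fun w hw ↦ hz ?_) measure_empty
    exact (norm_smul_add_smul_sphere hp z.1 z.2 w).symm.trans_lt hw.2.1

theorem exists_toSphere_inter_height_eq_setLIntegral {p : E} (hp : ‖p‖ = 1)
    [Nontrivial (ℝ ∙ p)ᗮ] :
    ∃ ν : Measure (Ioo (0 : ℝ) π), ∀ (A : Set E) (P : Set ℝ), MeasurableSet A → MeasurableSet P →
      σ[E] {x | (x : E) ∈ A ∧ ⟪p, x⟫ ∈ P} = ∫⁻ θ in {θ : Ioo (0 : ℝ) π | cos θ ∈ P},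
        σ[(ℝ ∙ p)ᗮ] {w | cos θ • p + sin θ • ((w : (ℝ ∙ p)ᗮ) : E) ∈ A} ∂ν := by
  obtain ⟨ν, hν⟩ := exists_toSphere_eq_lintegral hp
  refine ⟨ν, fun A P hA hP ↦ ?_⟩
  have hinner : Measurable fun x : E ↦ ⟪p, x⟫ := by fun_prop
  have hcos : Measurable fun θ : Ioo (0 : ℝ) π ↦ cos θ := by fun_prop
  have height (θ : ℝ) (w : sphere (0 : (ℝ ∙ p)ᗮ) 1) :
      ⟪p, cos θ • p + sin θ • ((w : (ℝ ∙ p)ᗮ) : E)⟫ = cos θ := by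
    rw [inner_add_right, inner_smul_right, inner_smul_right,
      Submodule.mem_orthogonal_singleton_iff_inner_right.1 w.1.2, real_inner_self_eq_norm_sq, hp]
    simp
  rw [← lintegral_indicator (s := {θ : Ioo (0 : ℝ) π | cos θ ∈ P}) (hcos hP)]
  refine (hν _ (hA.inter (hinner hP))).trans (lintegral_congr fun θ ↦ ?_)
  by_cases hθ : cos θ ∈ P <;> simp [indicator, height, hθ]

/-! ### Correlation of convex cones with caps -/

theorem toSphere_cone_inter_superlevel_mul_le_of_nontrivial {p : E} (hp : ‖p‖ = 1)
    [Nontrivial (ℝ ∙ p)ᗮ] {V : ConvexCone ℝ E} (hV : MeasurableSet (V : Set E)) (hpV : p ∈ V)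
    {k l : ℝ} (hkl : k ≤ l) :
    σ[E] {x | (x : E) ∈ V ∧ k ≤ ⟪p, x⟫} * σ[E] {x | l < ⟪p, x⟫} ≤
      σ[E] {x | (x : E) ∈ V ∧ l < ⟪p, x⟫} * σ[E] {x | k ≤ ⟪p, x⟫} := by
  obtain ⟨ν, hν⟩ := exists_toSphere_inter_height_eq_setLIntegral hp
  set slice : Ioo (0 : ℝ) π → ℝ≥0∞ := fun θ ↦
    σ[(ℝ ∙ p)ᗮ] {w | cos θ • p + sin θ • ((w : (ℝ ∙ p)ᗮ) : E) ∈ (V : Set E)}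
  have slice_anti {θ θ' : Ioo (0 : ℝ) π} (h : cos θ < cos θ') : slice θ ≤ slice θ' :=
    measure_mono fun w ↦ cos_smul_add_sin_smul_mem_of_lt V hpV <| not_le.1 fun hle ↦
      h.not_ge (cos_le_cos_of_nonneg_of_le_pi θ.2.1.le θ'.2.2.le hle)
  have cone_slices (P : Set ℝ) (hP : MeasurableSet P) :
      σ[E] {x | (x : E) ∈ V ∧ ⟪p, x⟫ ∈ P} = ∫⁻ θ in {θ | cos θ ∈ P}, slice θ ∂ν := hν V P hV hP
  have full_slices (P : Set ℝ) (hP : MeasurableSet P) :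
      σ[E] {x | ⟪p, x⟫ ∈ P} = σ[(ℝ ∙ p)ᗮ] univ * ν {θ | cos θ ∈ P} := by
    simpa using hν univ P .univ hP
  calc σ[E] {x | (x : E) ∈ V ∧ k ≤ ⟪p, x⟫} * σ[E] {x | l < ⟪p, x⟫}
      = (∫⁻ θ in {θ | k ≤ cos θ}, slice θ ∂ν) * (σ[(ℝ ∙ p)ᗮ] univ * ν {θ | l < cos θ}) :=
        congrArg₂ _ (cone_slices (Ici k) measurableSet_Ici) (full_slices (Ioi l) measurableSet_Ioi)
    _ = σ[(ℝ ∙ p)ᗮ] univ * (ν {θ | l < cos θ} * ∫⁻ θ in {θ | k ≤ cos θ}, slice θ ∂ν) := by ring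
    _ ≤ σ[(ℝ ∙ p)ᗮ] univ * (ν {θ | k ≤ cos θ} * ∫⁻ θ in {θ | l < cos θ}, slice θ ∂ν) := by
        refine mul_le_mul_right (measure_mul_setLIntegral_le
          (measurableSet_lt (by fun_prop) (by fun_prop)) (fun θ hθ ↦ hkl.trans (le_of_lt hθ))
          fun θ' hθ' θ hθ ↦ slice_anti ((not_lt.1 hθ.2).trans_lt hθ')) _
    _ = (∫⁻ θ in {θ | l < cos θ}, slice θ ∂ν) * (σ[(ℝ ∙ p)ᗮ] univ * ν {θ | k ≤ cos θ}) := by ring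
    _ = σ[E] {x | (x : E) ∈ V ∧ l < ⟪p, x⟫} * σ[E] {x | k ≤ ⟪p, x⟫} := (congrArg₂ _
        (cone_slices (Ioi l) measurableSet_Ioi) (full_slices (Ici k) measurableSet_Ici)).symm

theorem toSphere_cone_inter_superlevel_mul_le_of_subsingleton {p : E} (hp : ‖p‖ = 1)
    [Subsingleton (ℝ ∙ p)ᗮ] {V : ConvexCone ℝ E} (hpV : p ∈ V) {k l : ℝ} (hkl : k ≤ l) :
    σ[E] {x | (x : E) ∈ V ∧ k ≤ ⟪p, x⟫} * σ[E] {x | l < ⟪p, x⟫} ≤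
      σ[E] {x | (x : E) ∈ V ∧ l < ⟪p, x⟫} * σ[E] {x | k ≤ ⟪p, x⟫} := by
  by_cases hsub : ∀ x : sphere (0 : E) 1, l < ⟪p, x⟫ → (x : E) ∈ V
  · rw [mul_comm]
    exact mul_le_mul' (measure_mono fun x hx ↦ ⟨hsub x hx, hx⟩) (measure_mono fun x hx ↦ hx.2)
  · push Not at hsub
    obtain ⟨x₀, hlx₀, hx₀V⟩ := hsub
    obtain ⟨a, ha⟩ : ∃ a : ℝ, a • p = x₀ := by
      rw [← Submodule.mem_span_singleton, (Submodule.orthogonal_eq_bot_iff (K := ℝ ∙ p)).1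
        (Submodule.eq_bot_of_subsingleton)]
      trivial
    have hlt : l < -1 := by
      have hnorm : |a| = 1 := by simpa [norm_smul, hp] using congrArg norm ha
      have ha' : a ≤ 0 := not_lt.1 fun h ↦ hx₀V (ha ▸ V.smul_mem h hpV)
      rw [← ha, inner_smul_right, real_inner_self_eq_norm_sq, hp] at hlx₀
      rw [abs_of_nonpos ha'] at hnorm
      linarith
    refine mul_le_mul' (measure_mono fun x hx ↦ ⟨hx.1, hlt.trans_le ?_⟩)
      (measure_mono fun x hx ↦ hkl.trans (le_of_lt hx))
    simpa [hp] using neg_le_of_abs_le (abs_real_inner_le_norm p x)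

theorem toSphere_cone_inter_superlevel_mul_le {q : E} (hq : q ≠ 0) {V : ConvexCone ℝ E}
    (hV : MeasurableSet (V : Set E)) (hqV : q ∈ V) {k l : ℝ} (hkl : k ≤ l) :
    σ[E] {x | (x : E) ∈ V ∧ k ≤ ⟪q, x⟫} * σ[E] {x | l < ⟪q, x⟫} ≤
      σ[E] {x | (x : E) ∈ V ∧ l < ⟪q, x⟫} * σ[E] {x | k ≤ ⟪q, x⟫} := by
  have hnorm : 0 < ‖q‖ := norm_pos_iff.2 hq
  have hp : ‖‖q‖⁻¹ • q‖ = 1 := norm_smul_inv_norm hq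
  have hpV : ‖q‖⁻¹ • q ∈ V := V.smul_mem (inv_pos.2 hnorm) hqV
  have hscale : k / ‖q‖ ≤ l / ‖q‖ := by gcongr
  have h : σ[E] {x | (x : E) ∈ V ∧ k / ‖q‖ ≤ ⟪‖q‖⁻¹ • q, x⟫} *
        σ[E] {x | l / ‖q‖ < ⟪‖q‖⁻¹ • q, x⟫} ≤
      σ[E] {x | (x : E) ∈ V ∧ l / ‖q‖ < ⟪‖q‖⁻¹ • q, x⟫} *
        σ[E] {x | k / ‖q‖ ≤ ⟪‖q‖⁻¹ • q, x⟫} := by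
    cases subsingleton_or_nontrivial (ℝ ∙ (‖q‖⁻¹ • q))ᗮ
    · exact toSphere_cone_inter_superlevel_mul_le_of_subsingleton hp hpV hscale
    · exact toSphere_cone_inter_superlevel_mul_le_of_nontrivial hp hV hpV hscale
  simpa only [real_inner_smul_left, div_eq_inv_mul, mul_le_mul_iff_right₀ (inv_pos.2 hnorm),
    mul_lt_mul_iff_right₀ (inv_pos.2 hnorm)] using h

/-! ### Covering by caps -/

theorem aedisjoint_voronoiCone {t : Set E} {q q' : E} (hq : q ∈ t) (hq' : q' ∈ t) (h : q ≠ q') :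
    AEDisjoint σ[E] ((↑) ⁻¹' (voronoiCone t q : Set E)) ((↑) ⁻¹' (voronoiCone t q' : Set E)) :=
  measure_mono_null (fun x hx ↦ by
    simp only [mem_ofPred_eq]
    rw [inner_sub_left, sub_eq_zero]
    exact le_antisymm (hx.2 q hq) (hx.1 q' hq')) (toSphere_inner_eq_zero (sub_ne_zero.2 h))

theorem toSphere_univ_mul_superlevel_le_of_finset {t : Finset E} {u : E} (hu : u ≠ 0)
    (ht : ∀ q ∈ t, ‖q‖ = ‖u‖) {k l : ℝ} (hkl : k ≤ l)
    (hcover : ∀ x : sphere (0 : E) 1, ∃ q ∈ t, k ≤ ⟪q, x⟫) :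
    σ[E] univ * σ[E] {x | l < ⟪u, x⟫} ≤
      σ[E] {x | ∃ q ∈ t, l < ⟪q, x⟫} * σ[E] {x | k ≤ ⟪u, x⟫} := by
  set V := voronoiCone (t : Set E)
  have hV (q : E) : MeasurableSet (V q : Set E) := measurableSet_voronoiCone _ q
  have univ_le : σ[E] univ ≤ ∑ q ∈ t, σ[E] {x | (x : E) ∈ V q ∧ k ≤ ⟪q, x⟫} := by
    refine (measure_mono fun x _ ↦ ?_).trans (measure_biUnion_finset_le t _)
    obtain ⟨q₀, hq₀, hk⟩ := hcover x
    obtain ⟨q, hq, hxq⟩ := exists_mem_voronoiCone ⟨q₀, hq₀⟩ (x : E)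
    exact mem_biUnion hq ⟨hxq, hk.trans (hxq q₀ hq₀)⟩
  have sum_le : ∑ q ∈ t, σ[E] {x | (x : E) ∈ V q ∧ l < ⟪q, x⟫} ≤
      σ[E] {x | ∃ q ∈ t, l < ⟪q, x⟫} := by
    have hmeas (q : E) : MeasurableSet {x : sphere (0 : E) 1 | (x : E) ∈ V q ∧ l < ⟪q, x⟫} := by
      have hlt : MeasurableSet {x : sphere (0 : E) 1 | l < ⟪q, x⟫} :=
        measurableSet_lt (by fun_prop) (by fun_prop)
      exact (measurable_subtype_coe (hV q)).inter hlt
    rw [← measure_biUnion_finset₀ (fun q hq q' hq' h ↦ (aedisjoint_voronoiCone hq hq' h).mono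
      (fun x hx ↦ hx.1) (fun x hx ↦ hx.1)) fun q _ ↦ (hmeas q).nullMeasurableSet]
    exact measure_mono (iUnion₂_subset fun q hq x hx ↦ ⟨q, hq, hx.2⟩)
  have cell (q : E) (hq : q ∈ t) :
      σ[E] {x | (x : E) ∈ V q ∧ k ≤ ⟪q, x⟫} * σ[E] {x | l < ⟪u, x⟫} ≤
        σ[E] {x | (x : E) ∈ V q ∧ l < ⟪q, x⟫} * σ[E] {x | k ≤ ⟪u, x⟫} := by
    have hlt : σ[E] {x | l < ⟪q, x⟫} = σ[E] {x | l < ⟪u, x⟫} :=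
      toSphere_inner_congr (ht q hq) measurableSet_Ioi
    have hle : σ[E] {x | k ≤ ⟪q, x⟫} = σ[E] {x | k ≤ ⟪u, x⟫} :=
      toSphere_inner_congr (ht q hq) measurableSet_Ici
    have hq₀ : q ≠ 0 := norm_ne_zero_iff.1 ((ht q hq).trans_ne (norm_ne_zero_iff.2 hu))
    rw [← hlt, ← hle]
    exact toSphere_cone_inter_superlevel_mul_le hq₀ (hV q)
      (self_mem_voronoiCone fun q' hq' ↦ (ht q' hq').trans (ht q hq).symm) hkl
  calc σ[E] univ * σ[E] {x | l < ⟪u, x⟫}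
      ≤ (∑ q ∈ t, σ[E] {x | (x : E) ∈ V q ∧ k ≤ ⟪q, x⟫}) * σ[E] {x | l < ⟪u, x⟫} := by gcongr
    _ ≤ (∑ q ∈ t, σ[E] {x | (x : E) ∈ V q ∧ l < ⟪q, x⟫}) * σ[E] {x | k ≤ ⟪u, x⟫} := by
        rw [Finset.sum_mul, Finset.sum_mul]
        exact Finset.sum_le_sum cell
    _ ≤ σ[E] {x | ∃ q ∈ t, l < ⟪q, x⟫} * σ[E] {x | k ≤ ⟪u, x⟫} := by gcongr

theorem toSphere_univ_mul_superlevel_le {Q : Set E} {u : E} (hu : u ≠ 0)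
    (hQ : ∀ q ∈ Q, ‖q‖ = ‖u‖) {k l : ℝ} (hkl : k ≤ l)
    (hcover : ∀ x : sphere (0 : E) 1, ∃ q ∈ Q, k ≤ ⟪q, x⟫) :
    σ[E] univ * σ[E] {x | l < ⟪u, x⟫} ≤
      σ[E] {x | ∃ q ∈ Q, l < ⟪q, x⟫} * σ[E] {x | k ≤ ⟪u, x⟫} := by
  have approx (ε : ℝ) (hε : 0 < ε) : σ[E] univ * σ[E] {x | l < ⟪u, x⟫} ≤
      σ[E] {x | ∃ q ∈ Q, l < ⟪q, x⟫} * σ[E] {x | k - ε ≤ ⟪u, x⟫} := by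
    obtain ⟨t, htQ, htfin, ht⟩ := IsCompact.elim_finite_subcover_image
      (c := fun q : E ↦ {x : sphere (0 : E) 1 | k - ε < ⟪q, x⟫}) isCompact_univ
      (fun q _ ↦ isOpen_lt (by fun_prop) (by fun_prop)) fun x _ ↦
        let ⟨_, hq, hx⟩ := hcover x
        mem_biUnion hq (((sub_lt_self k hε).trans_le hx : k - ε < _))
    lift t to Finset E using htfin
    refine (toSphere_univ_mul_superlevel_le_of_finset hu (fun q hq ↦ hQ q (htQ hq))
      ((sub_le_self k hε.le).trans hkl) fun x ↦ ?_).trans (mul_le_mul_left (measure_mono ?_) _)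
    · obtain ⟨q, hq, hx⟩ := mem_iUnion₂.1 (ht (mem_univ x))
      exact ⟨q, hq, le_of_lt hx⟩
    · exact fun x ⟨q, hq, hx⟩ ↦ ⟨q, htQ hq, hx⟩
  have continuity_above := tendsto_measure_biInter_gt (μ := σ[E]) (a := (0 : ℝ))
    (s := fun ε ↦ {x | k - ε ≤ ⟪u, x⟫})
    (fun ε _ ↦ (measurableSet_le (by fun_prop) (by fun_prop)).nullMeasurableSet)
    (fun ε ε' _ h x hx ↦ (sub_le_sub_left h k).trans hx) ⟨1, one_pos, measure_ne_top _ _⟩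
  have hinter : (⋂ ε > (0 : ℝ), {x : sphere (0 : E) 1 | k - ε ≤ ⟪u, x⟫}) =
      ({x | k ≤ ⟪u, x⟫} : Set (sphere (0 : E) 1)) := by
    ext x
    simp only [mem_iInter, mem_ofPred_eq]
    exact ⟨le_of_forall_sub_le, fun h ε hε ↦ (sub_le_self k (le_of_lt hε)).trans h⟩
  rw [hinter] at continuity_above
  exact ge_of_tendsto (ENNReal.Tendsto.const_mul continuity_above (Or.inr (measure_ne_top _ _)))
    (eventually_mem_nhdsWithin.mono approx)

theorem two_mul_superlevel_le_toSphere {Q : Set E} {u : E} (hu : u ≠ 0)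
    (hQ : ∀ q ∈ Q, ‖q‖ = ‖u‖) {l : ℝ} (hl : 0 ≤ l)
    (hnet : ∀ x : sphere (0 : E) 1, ∃ q ∈ Q, 0 ≤ ⟪q, x⟫) :
    2 * σ[E] {x | l < ⟪u, x⟫} ≤ σ[E] {x | ∃ q ∈ Q, l < ⟪q, x⟫} := by
  have : Nontrivial E := ⟨u, 0, hu⟩
  have hhalf := toSphere_univ_eq_two_mul hu
  have hne : σ[E] {x | 0 ≤ ⟪u, x⟫} ≠ 0 := fun h ↦ by
    rw [h, mul_zero, Measure.measure_univ_eq_zero] at hhalf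
    exact Measure.toSphere_ne_zero volume hhalf
  refine (ENNReal.mul_le_mul_iff_left hne (measure_ne_top _ _)).1 ?_
  rw [mul_right_comm, ← hhalf]
  exact toSphere_univ_mul_superlevel_le hu hQ hl hnet

theorem toSphere_inter_sublevel_le {Q : Set E} {u : E} (hQ : ∀ q ∈ Q, ‖q‖ = ‖u‖)
    (hnet : ∀ x : sphere (0 : E) 1, ∃ q ∈ Q, 0 ≤ ⟪q, x⟫) (l : ℝ) :
    σ[E] {x | ∀ q ∈ Q, ⟪q, x⟫ ≤ l} ≤ σ[E] {x | |⟪u, x⟫| ≤ l} := by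
  obtain hl | hl := lt_or_ge l 0
  · refine measure_mono fun x hx ↦ ?_
    obtain ⟨q, hq, hqx⟩ := hnet x
    exact absurd (hqx.trans (hx q hq)) hl.not_ge
  obtain rfl | hu := eq_or_ne u 0
  · exact measure_mono fun x _ ↦ by simpa
  set above : Set (sphere (0 : E) 1) := {x | ∃ q ∈ Q, l < ⟪q, x⟫}
  set outside : Set (sphere (0 : E) 1) := {x | l < |⟪u, x⟫|}
  have habove : {x : sphere (0 : E) 1 | ∀ q ∈ Q, ⟪q, x⟫ ≤ l} = aboveᶜ := by
    ext x
    simp [above]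
  have houtside : {x : sphere (0 : E) 1 | |⟪u, x⟫| ≤ l} = outsideᶜ := by
    ext x
    simp [outside]
  have hopen : IsOpen above := by
    have hunion : above = (⋃ q ∈ Q, {x | l < ⟪q, x⟫} : Set (sphere (0 : E) 1)) := by
      ext x
      simp [above]
    rw [hunion]
    exact isOpen_biUnion fun q _ ↦ isOpen_lt (by fun_prop) (by fun_prop)
  have le_two_mul : σ[E] outside ≤ 2 * σ[E] {x | l < ⟪u, x⟫} := by
    have hneg : σ[E] {x | l < ⟪-u, x⟫} = σ[E] {x | l < ⟪u, x⟫} :=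
      toSphere_inner_congr (norm_neg u) measurableSet_Ioi
    rw [two_mul]
    nth_rw 2 [← hneg]
    refine (measure_mono fun x hx ↦ ?_).trans (measure_union_le _ _)
    simpa only [mem_union, mem_ofPred_eq, inner_neg_left] using lt_abs.1 hx
  rw [habove, houtside, measure_compl hopen.measurableSet (measure_ne_top _ _),
    measure_compl (measurableSet_lt (by fun_prop) (by fun_prop)) (measure_ne_top _ _)]
  exact tsub_le_tsub_left (le_two_mul.trans (two_mul_superlevel_le_toSphere hu hQ hl hnet)) _

/-! ### Intersections of disks -/

theorem toSphere_inter_halfSpaces_le {p : E} (hp : ‖p‖ = 1) [Nontrivial (ℝ ∙ p)ᗮ]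
    {Q : Set (ℝ ∙ p)ᗮ} {u : (ℝ ∙ p)ᗮ} (hQ : ∀ q ∈ Q, ‖q‖ = ‖u‖)
    (hnet : ∀ w : sphere (0 : (ℝ ∙ p)ᗮ) 1, ∃ q ∈ Q, 0 ≤ ⟪q, w⟫) (a b : ℝ) :
    σ[E] {x | ∀ q ∈ Q, b ≤ ⟪a • p - q, x⟫} ≤
      σ[E] {x | b ≤ ⟪a • p + u, x⟫ ∧ b ≤ ⟪a • p - u, x⟫} := by
  obtain ⟨ν, hν⟩ := exists_toSphere_eq_lintegral hp
  have halfSpace_closed (c : E) : IsClosed {x | b ≤ ⟪c, x⟫} :=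
    isClosed_le (by fun_prop) (by fun_prop)
  have slice_iff := le_inner_slice_iff hp a b
  have slice_iff_neg (w : (ℝ ∙ p)ᗮ) (θ : Ioo (0 : ℝ) π) :
      b ≤ ⟪a • p + u, cos θ • p + sin θ • (w : E)⟫ ↔ -⟪u, w⟫ ≤ (a * cos θ - b) / sin θ := by
    simpa using slice_iff (-u) w θ
  have hleft : MeasurableSet {x | ∀ q ∈ Q, b ≤ ⟪a • p - q, x⟫} := by
    simpa only [ofPred_forall] using
      (isClosed_biInter fun q (_ : q ∈ Q) ↦ halfSpace_closed (a • p - q)).measurableSet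
  have hright : MeasurableSet {x | b ≤ ⟪a • p + u, x⟫ ∧ b ≤ ⟪a • p - u, x⟫} :=
    ((halfSpace_closed _).inter (halfSpace_closed _)).measurableSet
  calc σ[E] {x | ∀ q ∈ Q, b ≤ ⟪a • p - q, x⟫}
      = ∫⁻ θ, σ[(ℝ ∙ p)ᗮ] {w | ∀ q ∈ Q, ⟪q, w⟫ ≤ (a * cos θ - b) / sin θ} ∂ν := by
        refine (hν _ hleft).trans ?_
        simp only [mem_ofPred_eq, slice_iff]
    _ ≤ ∫⁻ θ, σ[(ℝ ∙ p)ᗮ] {w | |⟪u, w⟫| ≤ (a * cos θ - b) / sin θ} ∂ν :=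
        lintegral_mono fun θ ↦ toSphere_inter_sublevel_le hQ hnet _
    _ = σ[E] {x | b ≤ ⟪a • p + u, x⟫ ∧ b ≤ ⟪a • p - u, x⟫} := by
        refine Eq.trans ?_ (hν _ hright).symm
        simp only [mem_ofPred_eq, slice_iff, slice_iff_neg, abs_le', and_comm]

theorem volume_inter_disks_le_general (p : sphere (0 : E) 1) (R : ℝ) (C : Set (sphere (0 : E) 1))
    (hC : ∀ c ∈ C, ⟪(p : E), c⟫ = cos R)
    (hnet : ∀ v : E, ‖v‖ = 1 → ⟪v, p⟫ = 0 → ∃ c ∈ C, 0 ≤ ⟪v, c⟫)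
    (r : ℝ) {u : E} (hu : ‖u‖ = 1) (hup : ⟪u, p⟫ = 0) :
    σ[E] (⋂ c ∈ C, {x | cos r ≤ ⟪(c : E), x⟫}) ≤
      σ[E] ({x | cos r ≤ ⟪cos R • (p : E) + sin R • u, x⟫} ∩
        {x | cos r ≤ ⟪cos R • (p : E) - sin R • u, x⟫}) := by
  have hp : ‖(p : E)‖ = 1 := norm_eq_of_mem_sphere p
  lift u to (ℝ ∙ (p : E))ᗮ using Submodule.mem_orthogonal_singleton_iff_inner_left.2 hup
  have : Nontrivial (ℝ ∙ (p : E))ᗮ := ⟨u, 0, norm_ne_zero_iff.1 (hu.trans_ne one_ne_zero)⟩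
  set Q : Set (ℝ ∙ (p : E))ᗮ := {q | ∃ c ∈ C, (c : E) = cos R • (p : E) - q}
  have hQ : ∀ q ∈ Q, ‖q‖ = ‖sin R • u‖ := by
    rintro q ⟨c, -, hcq⟩
    rw [norm_eq_abs_sin_of_norm_cos_smul_sub hp (hcq ▸ norm_eq_of_mem_sphere c), norm_smul,
      show ‖u‖ = 1 from hu, mul_one, norm_eq_abs]
  have hQnet (w : sphere (0 : (ℝ ∙ (p : E))ᗮ) 1) : ∃ q ∈ Q, 0 ≤ ⟪q, w⟫ := by
    have hpw : ⟪(p : E), ((w : (ℝ ∙ (p : E))ᗮ) : E)⟫ = 0 :=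
      Submodule.mem_orthogonal_singleton_iff_inner_right.1 w.1.2
    obtain ⟨c, hc, hwc⟩ := hnet (-w) ((norm_neg _).trans (norm_eq_of_mem_sphere w))
      (by simp [real_inner_comm, hpw])
    have hperp : cos R • (p : E) - c ∈ (ℝ ∙ (p : E))ᗮ := by
      rw [Submodule.mem_orthogonal_singleton_iff_inner_right]
      simp [inner_sub_right, inner_smul_right, hC c hc]
    refine ⟨⟨_, hperp⟩, ⟨c, hc, (sub_sub_cancel _ _).symm⟩, ?_⟩
    simpa [inner_sub_left, inner_smul_left, hpw, real_inner_comm] using hwc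
  refine (measure_mono fun x hx q ⟨c, hc, hcq⟩ ↦ ?_).trans
    (toSphere_inter_halfSpaces_le hp hQ hQnet (cos R) (cos r))
  exact hcq ▸ mem_iInter₂.1 hx c hc

end

/-- Volume comparison for intersections of disks on the round sphere
(Lemma 3.1, `k = 1` case): if the directions from `p` to `C ⊆ S(p, R)` form a
π/2-net, then for every `r ∈ (0, π]` the measure of `⋂_{c ∈ C} D(c, r)` is at
most that of `D(c₁, r) ∩ D(c₂, r)` for antipodal directions `c₁, c₂` on the
metric sphere of radius `R` about `p`. -/
theorem volume_inter_disks_le (n : ℕ) (hn : 2 ≤ n) (p : USphere n)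
    (R : ℝ) (hR : R ∈ Set.Ioc 0 (Real.pi / 2))
    (C : Set (USphere n))
    (hC : ∀ c ∈ C, ⟪(p : Esp n), (c : Esp n)⟫ = Real.cos R)
    (hnet : ∀ v : Esp n, ‖v‖ = 1 → ⟪v, (p : Esp n)⟫ = 0 →
      ∃ c ∈ C, 0 ≤ ⟪v, (c : Esp n)⟫)
    (r : ℝ) (hr : r ∈ Set.Ioc 0 Real.pi)
    (u : Esp n) (hu : ‖u‖ = 1) (hup : ⟪u, (p : Esp n)⟫ = 0) :
    sphereMeasure n (⋂ c ∈ C, geoDisk (c : Esp n) r) ≤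
      sphereMeasure n
        (geoDisk (Real.cos R • (p : Esp n) + Real.sin R • u) r ∩
          geoDisk (Real.cos R • (p : Esp n) - Real.sin R • u) r) :=
  volume_inter_disks_le_general p R C hC hnet r hu hup
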